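/- Let X = ω² + 1 (realized as Iic(ω²) with the subspace topology from the order topology on ordinals) and let f : X → X be continuous such that some w ∈ X has dense orbit. Then the Ellis semigroup E(X,f), as a subspace of X^X with the pointwise convergence topology, is homeomorphic to ω² + 1. -/

import Mathlib

/-!
Let `X` be a compact Hausdorff space whose second derived set is a single point `t`, and let `w`
have dense orbit under `f`. Then the derived set `X'` is the ω-limit set `L` of `w`. It satisfies
`f(L) = L`, and its points accumulate only at `t`, so `f` fixes `t`. No other point of `L` is
periodic: a finite invariant subset of `L` avoiding `t` would be clopen in `L`, and an orbit that
comes close to such a set late enough is trapped near it. So every orbit in `L` converges to `t`,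
and a limit `g` of iterates equals `t` on `L` and is determined elsewhere by `g w ∈ L`, since it
commutes with `f`. Evaluation at `w` is thus a continuous bijection from the compact Ellis semigroup
onto `X`. For `X = ω² + 1`, the set `X'` consists of the nonzero multiples of `ω`, and `t = ω²`.
-/

open Filter Topology Function Set

section DerivedSet

variable {X : Type*} [TopologicalSpace X]

theorem derivedSet_eq_empty_of_finite [T1Space X] {A : Set X} (hA : A.Finite) :
    derivedSet A = ∅ :=
  eq_empty_of_forall_notMem fun _ hx => Set.Infinite.of_accPt hx hA

theorem derivedSet_sdiff_of_finite [T1Space X] (A : Set X) {B : Set X} (hB : B.Finite) :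
    derivedSet (A \ B) = derivedSet A := by
  refine (derivedSet_mono _ _ sdiff_subset).antisymm ?_
  calc derivedSet A ⊆ derivedSet (A \ B ∪ B) := derivedSet_mono _ _ (by simp)
    _ = derivedSet (A \ B) := by
      rw [derivedSet_union, derivedSet_eq_empty_of_finite hB, union_empty]

theorem infinite_of_derivedSet_eq_singleton [T1Space X] {A : Set X} {t : X}
    (hA : derivedSet A = {t}) : A.Infinite := fun hfin =>
  (singleton_nonempty t).ne_empty (hA ▸ derivedSet_eq_empty_of_finite hfin)

theorem infinite_compl_derivedSet_univ [T1Space X] {t : X}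
    (hX : derivedSet (derivedSet (univ : Set X)) = {t}) :
    (derivedSet (univ : Set X))ᶜ.Infinite := by
  intro hfin
  have hX' : derivedSet (univ : Set X) = {t} := by
    rw [← derivedSet_sdiff_of_finite univ hfin, sdiff_compl, univ_inter, hX]
  exact infinite_of_derivedSet_eq_singleton hX (hX' ▸ finite_singleton t)

theorem tendsto_subtypeVal_cofinite [CompactSpace X] {A : Set X} {t : X}
    (hA : derivedSet A ⊆ {t}) : Tendsto ((↑) : A → X) cofinite (𝓝 t) := by
  intro V hV
  by_contra hinf
  have hAV : (A \ V).Infinite := by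
    refine (Set.Infinite.image Subtype.val_injective.injOn hinf).mono ?_
    rintro _ ⟨x, hxV, rfl⟩
    exact ⟨x.2, hxV⟩
  obtain ⟨x, hx⟩ := hAV.exists_accPt_principal
  obtain rfl : x = t := hA (derivedSet_mono _ _ sdiff_subset hx)
  obtain ⟨y, ⟨hyV, -, hyV'⟩, -⟩ := accPt_iff_nhds.1 hx V hV
  exact hyV' hyV

theorem map_eq_of_tendsto_cofinite [T2Space X] {f : X → X} {A : Set X} {t : X} (hA : A.Infinite)
    (hAt : Tendsto ((↑) : A → X) cofinite (𝓝 t)) (hf : ContinuousAt f t) (hfA : SurjOn f A A) :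
    f t = t := by
  have := hA.to_subtype
  choose r hrA hr using hfA
  let r' : A → A := fun y => ⟨r y.2, hrA y.2⟩
  have hr' : Injective r' := fun y z hyz => Subtype.ext <| by
    rw [← hr y.2, ← hr z.2]; exact congrArg (fun x : A => f x) hyz
  have hft : Tendsto (fun y : A => f (r' y)) cofinite (𝓝 (f t)) :=
    hf.tendsto.comp (hAt.comp hr'.tendsto_cofinite)
  exact tendsto_nhds_unique (hft.congr fun y => hr y.2) hAt

theorem derivedSet_preimage_val {U : Set X} (hU : IsOpen U) (A : Set X) :
    derivedSet ((↑) ⁻¹' A : Set U) = (↑) ⁻¹' derivedSet A := by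
  ext x
  rw [mem_derivedSet, ← comap_principal, hU.isOpenEmbedding_subtypeVal.accPt_comap_iff]
  rfl

end DerivedSet

section Sequence

variable {X : Type*} [TopologicalSpace X] {u : ℕ → X} {y : X}

theorem mem_range_or_mapClusterPt_of_mem_closure_range [T1Space X] (hy : y ∈ closure (range u)) :
    y ∈ range u ∨ MapClusterPt y atTop u := by
  have hy' : MapClusterPt y ⊤ u := by
    rwa [MapClusterPt, map_top, ← mem_closure_iff_clusterPt]
  obtain ⟨v, -, hv⟩ := mapClusterPt_iff_ultrafilter.1 hy'
  rcases v.le_cofinite_or_eq_pure with hcof | ⟨n, rfl⟩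
  · exact Or.inr (mapClusterPt_iff_ultrafilter.2 ⟨v, Nat.cofinite_eq_atTop ▸ hcof, hv⟩)
  · exact Or.inl ⟨n, pure_le_nhds_iff.1 hv⟩

theorem derivedSet_range_of_injective [T1Space X] (hu : Injective u) :
    derivedSet (range u) = {y | MapClusterPt y atTop u} := by
  ext y
  rw [mem_derivedSet, mem_ofPred_eq, mapClusterPt_iff_frequently]
  simp only [Nat.frequently_atTop_iff_infinite]
  refine ⟨fun hy V hV hfin => ?_, fun hy => accPt_iff_nhds.2 fun V hV => ?_⟩
  · refine Set.Infinite.of_accPt (hy.nhds_inter hV) ((hfin.image u).subset ?_)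
    rintro _ ⟨hxV, n, rfl⟩
    exact ⟨n, hxV, rfl⟩
  · obtain ⟨_, ⟨n, hn, rfl⟩, hne⟩ := ((hy V hV).image hu.injOn).exists_notMem_finite
      (finite_singleton y)
    exact ⟨u n, ⟨hn, n, rfl⟩, hne⟩

theorem eq_of_mapClusterPt_of_tendsto [T2Space X] {ι : Type*} {l : Filter ι} {v : ι → X} {x z : X}
    (hx : MapClusterPt x l v) (hz : Tendsto v l (𝓝 z)) : x = z :=
  have : (𝓝 x ⊓ 𝓝 z).NeBot := ClusterPt.mono hx hz
  eq_of_nhds_neBot this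

end Sequence

section Iterate

variable {α : Type*} {f : α → α} {x : α}

theorem finite_range_iterate_of_mem_periodicPts (hx : x ∈ periodicPts f) :
    (range fun n : ℕ => f^[n] x).Finite := by
  refine ((finite_Iio (minimalPeriod f x)).image fun n : ℕ => f^[n] x).subset ?_
  rintro _ ⟨n, rfl⟩
  exact ⟨n % minimalPeriod f x, Nat.mod_lt _ (minimalPeriod_pos_of_mem_periodicPts hx),
    iterate_mod_minimalPeriod_eq⟩

theorem exists_iterate_mem_periodicPts_of_not_injective
    (h : ¬ Injective fun n : ℕ => f^[n] x) : ∃ k : ℕ, f^[k] x ∈ periodicPts f := by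
  obtain ⟨i, j, hij, hlt⟩ : ∃ i j : ℕ, f^[i] x = f^[j] x ∧ i < j := by
    obtain ⟨i, j, hij, hne⟩ := not_injective_iff.1 h
    rcases hne.lt_or_gt with hlt | hlt
    exacts [⟨i, j, hij, hlt⟩, ⟨j, i, hij.symm, hlt⟩]
  refine ⟨i, mk_mem_periodicPts (Nat.sub_pos_of_lt hlt) ?_⟩
  rw [IsPeriodicPt, IsFixedPt, ← iterate_add_apply, Nat.sub_add_cancel hlt.le, hij]

theorem finite_range_iterate_of_not_injective (h : ¬ Injective fun n : ℕ => f^[n] x) :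
    (range fun n : ℕ => f^[n] x).Finite := by
  obtain ⟨k, hk⟩ := exists_iterate_mem_periodicPts_of_not_injective h
  refine (((finite_Iio k).image fun n : ℕ => f^[n] x).union
    (finite_range_iterate_of_mem_periodicPts hk)).subset ?_
  rintro _ ⟨n, rfl⟩
  rcases lt_or_ge n k with hn | hn
  · exact Or.inl ⟨n, hn, rfl⟩
  · refine Or.inr ⟨n - k, ?_⟩
    simp only [← iterate_add_apply, Nat.sub_add_cancel hn]

theorem eq_of_mem_periodicPts_of_isFixedPt_iterate (hx : x ∈ periodicPts f) {k : ℕ}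
    (hk : IsFixedPt f (f^[k] x)) : f^[k] x = x := by
  have hfix : IsFixedPt f x := by
    rwa [← minimalPeriod_eq_one_iff_isFixedPt, ← minimalPeriod_apply_iterate hx k,
      minimalPeriod_eq_one_iff_isFixedPt]
  exact hfix.iterate k

theorem injective_iterate_of_denseRange [TopologicalSpace α] [T1Space α] [Infinite α]
    (hx : DenseRange fun n : ℕ => f^[n] x) : Injective fun n : ℕ => f^[n] x := by
  by_contra h
  have hfin := finite_range_iterate_of_not_injective h
  exact infinite_univ (hx.closure_range ▸ hfin.isClosed.closure_eq ▸ hfin)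

end Iterate

/-- The ω-limit set of the forward orbit of `w` under `f`, as an instance of Mathlib's
`omegaLimit`. -/
def orbitLimitSet {X : Type*} [TopologicalSpace X] (f : X → X) (w : X) : Set X :=
  omegaLimit atTop (fun n : ℕ => f^[n]) {w}

section OrbitLimitSet

variable {X : Type*} [TopologicalSpace X] {f : X → X} {w x y t : X}

theorem mem_orbitLimitSet_iff :
    y ∈ orbitLimitSet f w ↔ MapClusterPt y atTop fun n : ℕ => f^[n] w :=
  mem_omegaLimit_singleton_iff_mapClusterPt _ _ _ _

theorem isClosed_orbitLimitSet : IsClosed (orbitLimitSet f w) :=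
  isClosed_omegaLimit _ _ _

theorem mapsTo_orbitLimitSet (hf : Continuous f) :
    MapsTo f (orbitLimitSet f w) (orbitLimitSet f w) :=
  Flow.isInvariant_omegaLimit atTop (Flow.fromIter hf) {w}
    (fun n => tendsto_atTop_mono (Nat.le_add_left · n) tendsto_id) 1

theorem surjOn_orbitLimitSet [CompactSpace X] [T2Space X] (hf : Continuous f) :
    SurjOn f (orbitLimitSet f w) (orbitLimitSet f w) := by
  intro y hy
  obtain ⟨v, hv, hvy⟩ := mapClusterPt_iff_ultrafilter.1 (mem_orbitLimitSet_iff.1 hy)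
  let pred : ℕ → ℕ := fun n => n - 1
  obtain ⟨x, -, hx⟩ := isCompact_univ.ultrafilter_le_nhds
    ((v.map pred).map fun n => f^[n] w) (by simp)
  refine ⟨x, mem_orbitLimitSet_iff.2 (mapClusterPt_iff_ultrafilter.2 ⟨v.map pred, ?_, hx⟩), ?_⟩
  · exact (tendsto_sub_atTop_nat 1).mono_left hv
  · have hfx : Tendsto (fun n => f (f^[n - 1] w)) v (𝓝 (f x)) := (hf.tendsto x).comp hx
    refine tendsto_nhds_unique (hfx.congr' ?_) hvy
    filter_upwards [hv (eventually_ge_atTop 1)] with n hn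
    rw [← iterate_succ_apply' f, Nat.succ_eq_add_one, Nat.sub_add_cancel hn]

theorem exists_mem_orbitLimitSet_of_frequently [CompactSpace X] {C : Set X}
    (hC : IsClosed C) (h : ∃ᶠ n : ℕ in atTop, f^[n] w ∈ C) : ∃ x ∈ C, x ∈ orbitLimitSet f w := by
  obtain ⟨x, hxC, hx⟩ := hC.isCompact.exists_mapClusterPt_of_frequently h
  exact ⟨x, hxC, mem_orbitLimitSet_iff.2 hx⟩

theorem eventually_iterate_mem_of_orbitLimitSet_subset [CompactSpace X] {U : Set X} (hU : IsOpen U)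
    (h : orbitLimitSet f w ⊆ U) : ∀ᶠ n : ℕ in atTop, f^[n] w ∈ U :=
  (eventually_mapsTo_of_isOpen_of_omegaLimit_subset _ _ _ hU h).mono fun _ hn => hn rfl

theorem orbitLimitSet_subset_of_eventually {C : Set X} (hC : IsClosed C)
    (h : ∀ᶠ n : ℕ in atTop, f^[n] w ∈ C) : orbitLimitSet f w ⊆ C := fun _ hy =>
  hC.mem_of_mapClusterPt (mem_orbitLimitSet_iff.1 hy) h

/-- `P` and its complement in the ω-limit set have disjoint neighbourhoods, and an orbit that enters
the one of `P` late enough can never leave it. -/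
theorem eq_orbitLimitSet_of_mapsTo [CompactSpace X] [T2Space X] (hf : Continuous f) {P : Set X}
    (hPc : IsClosed P) (hPc' : IsClosed (orbitLimitSet f w \ P)) (hP : P ⊆ orbitLimitSet f w)
    (hne : P.Nonempty) (hPf : MapsTo f P P) : P = orbitLimitSet f w := by
  obtain ⟨U, V, hU, hV, hPU, hPV, hUV⟩ :=
    normal_separation hPc hPc' disjoint_sdiff_right
  have hmem : ∀ x ∈ orbitLimitSet f w, x ∈ P ∨ x ∈ V := fun x hx =>
    (em (x ∈ P)).imp_right fun hxP => hPV ⟨hx, hxP⟩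
  have hUV_iterate : ∀ᶠ n : ℕ in atTop, f^[n] w ∈ U ∪ V :=
    eventually_iterate_mem_of_orbitLimitSet_subset (hU.union hV) fun x hx =>
      (hmem x hx).imp_left (hPU ·)
  have hstep : ∀ᶠ n : ℕ in atTop, f^[n] w ∉ closure U ∩ f ⁻¹' closure V := by
    by_contra h
    obtain ⟨x, ⟨hxU, hfxV⟩, hx⟩ := exists_mem_orbitLimitSet_of_frequently
      (isClosed_closure.inter (isClosed_closure.preimage hf)) h
    have hxP : x ∈ P := (hmem x hx).resolve_right fun hxV =>
      disjoint_left.1 (hUV.closure_left hV) hxU hxV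
    exact disjoint_left.1 (hUV.closure_right hU) (hPU (hPf hxP)) hfxV
  obtain ⟨N, hN⟩ := eventually_atTop.1 (hUV_iterate.and hstep)
  obtain ⟨p, hp⟩ := hne
  obtain ⟨M, hMU, hNM⟩ := ((mapClusterPt_iff_frequently.1 (mem_orbitLimitSet_iff.1 (hP hp)) U
    (hU.mem_nhds (hPU hp))).and_eventually (eventually_ge_atTop N)).exists
  have htrapped : ∀ n ≥ M, f^[n] w ∈ U := by
    intro n hn
    induction n, hn using Nat.le_induction with
    | base => exact hMU
    | succ n hn ih =>
      refine (hN (n + 1) (by omega)).1.resolve_right fun hnV => ?_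
      refine (hN n (by omega)).2 ⟨subset_closure ih, subset_closure ?_⟩
      rwa [← iterate_succ_apply' f n w]
  have hLU : orbitLimitSet f w ⊆ closure U :=
    orbitLimitSet_subset_of_eventually isClosed_closure
      (eventually_atTop.2 ⟨M, fun n hn => subset_closure (htrapped n hn)⟩)
  exact hP.antisymm fun x hx => (hmem x hx).resolve_right fun hxV =>
    disjoint_left.1 (hUV.closure_left hV) (hLU hx) hxV

theorem univ_eq_range_union_orbitLimitSet [T1Space X] (hw : DenseRange fun n : ℕ => f^[n] w) :
    univ = (range fun n : ℕ => f^[n] w) ∪ orbitLimitSet f w :=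
  (eq_univ_of_forall fun y => (mem_range_or_mapClusterPt_of_mem_closure_range (hw y)).imp_right
    mem_orbitLimitSet_iff.2).symm

theorem derivedSet_univ_eq_orbitLimitSet [T1Space X] [Infinite X]
    (hw : DenseRange fun n : ℕ => f^[n] w) : derivedSet (univ : Set X) = orbitLimitSet f w := by
  rw [← hw.closure_range, derivedSet_closure,
    derivedSet_range_of_injective (injective_iterate_of_denseRange hw)]
  exact ext fun _ => mem_orbitLimitSet_iff.symm

theorem iterate_notMem_orbitLimitSet [T1Space X] (hf : Continuous f)
    (hw : DenseRange fun n : ℕ => f^[n] w) (hL : (orbitLimitSet f w)ᶜ.Infinite) (n : ℕ) :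
    f^[n] w ∉ orbitLimitSet f w := by
  intro hn
  refine hL (((finite_Iio n).image fun k : ℕ => f^[k] w).subset fun y hy => ?_)
  obtain ⟨k, rfl⟩ := ((univ_eq_range_union_orbitLimitSet hw).subset (mem_univ y)).resolve_right hy
  refine ⟨k, mem_Iio.2 (lt_of_not_ge fun hnk => hy ?_), rfl⟩
  have := (mapsTo_orbitLimitSet hf).iterate (k - n) hn
  rwa [← iterate_add_apply, Nat.sub_add_cancel hnk] at this

end OrbitLimitSet

section OneAccumulationPoint

variable {X : Type*} [TopologicalSpace X] [CompactSpace X] [T2Space X] {f : X → X} {w x t : X}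

theorem isFixedPt_of_derivedSet_orbitLimitSet_eq_singleton (hf : Continuous f)
    (hL : derivedSet (orbitLimitSet f w) = {t}) : IsFixedPt f t :=
  map_eq_of_tendsto_cofinite (infinite_of_derivedSet_eq_singleton hL)
    (tendsto_subtypeVal_cofinite hL.subset) hf.continuousAt (surjOn_orbitLimitSet hf)

theorem eq_of_mem_orbitLimitSet_of_mem_periodicPts (hf : Continuous f)
    (hL : derivedSet (orbitLimitSet f w) = {t}) (hx : x ∈ orbitLimitSet f w)
    (hper : x ∈ periodicPts f) : x = t := by
  let P : Set X := range fun n : ℕ => f^[n] x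
  have hPfin : P.Finite := finite_range_iterate_of_mem_periodicPts hper
  by_cases htP : t ∈ P
  · obtain ⟨k, rfl⟩ := htP
    exact (eq_of_mem_periodicPts_of_isFixedPt_iterate hper
      (isFixedPt_of_derivedSet_orbitLimitSet_eq_singleton hf hL)).symm
  · have htL : t ∈ orbitLimitSet f w :=
      (isClosed_iff_derivedSet_subset _).1 isClosed_orbitLimitSet (hL ▸ mem_singleton t)
    have hPc' : IsClosed (orbitLimitSet f w \ P) := by
      rw [isClosed_iff_derivedSet_subset, derivedSet_sdiff_of_finite _ hPfin, hL]
      exact singleton_subset_iff.2 ⟨htL, htP⟩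
    have hPL : P ⊆ orbitLimitSet f w :=
      range_subset_iff.2 fun n => (mapsTo_orbitLimitSet hf).iterate n hx
    have hPf : MapsTo f P P := by
      rintro _ ⟨n, rfl⟩
      exact ⟨n + 1, iterate_succ_apply' f n x⟩
    have hPeq := eq_orbitLimitSet_of_mapsTo hf hPfin.isClosed hPc' hPL (range_nonempty _) hPf
    exact absurd (hPeq ▸ hPfin) (infinite_of_derivedSet_eq_singleton hL)

theorem tendsto_iterate_of_mem_orbitLimitSet (hf : Continuous f)
    (hL : derivedSet (orbitLimitSet f w) = {t}) (hx : x ∈ orbitLimitSet f w) :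
    Tendsto (fun n : ℕ => f^[n] x) atTop (𝓝 t) := by
  have hmem (n : ℕ) : f^[n] x ∈ orbitLimitSet f w := (mapsTo_orbitLimitSet hf).iterate n hx
  by_cases hinj : Injective fun n : ℕ => f^[n] x
  · have hinjL : Injective fun n : ℕ => (⟨f^[n] x, hmem n⟩ : orbitLimitSet f w) :=
      fun m n hmn => hinj (congrArg Subtype.val hmn)
    rw [← Nat.cofinite_eq_atTop]
    exact (tendsto_subtypeVal_cofinite hL.subset).comp hinjL.tendsto_cofinite
  · obtain ⟨k, hk⟩ := exists_iterate_mem_periodicPts_of_not_injective hinj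
    have hkt : f^[k] x = t := eq_of_mem_orbitLimitSet_of_mem_periodicPts hf hL (hmem k) hk
    refine tendsto_atTop_of_eventually_const (i₀ := k) fun n hn => ?_
    rw [← Nat.sub_add_cancel hn, iterate_add_apply, hkt]
    exact (isFixedPt_of_derivedSet_orbitLimitSet_eq_singleton hf hL).iterate (n - k)

end OneAccumulationPoint

/-- The Ellis semigroup `E(X, f)`: the closure of the iterates of `f` in `X → X` with the topology
of pointwise convergence, which is the product topology. -/
def ellisSemigroup {X : Type*} [TopologicalSpace X] (f : X → X) : Set (X → X) :=
  closure {g | ∃ n : ℕ, g = f^[n]}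

section EllisSemigroup

variable {X : Type*} [TopologicalSpace X] {f g h : X → X} {w t : X}

theorem ellisSemigroup_eq_closure_range : ellisSemigroup f = closure (range fun n : ℕ => f^[n]) :=
  congrArg closure (ext fun _ => exists_congr fun _ => eq_comm)

theorem commute_of_mem_ellisSemigroup [T2Space X] (hf : Continuous f) (hg : g ∈ ellisSemigroup f) :
    Function.Commute g f := by
  have hclosed : IsClosed {g : X → X | ∀ x, g (f x) = f (g x)} := by
    simp only [ofPred_forall]
    exact isClosed_iInter fun x => isClosed_eq (by fun_prop) (by fun_prop)
  refine closure_minimal ?_ hclosed hg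
  rintro _ ⟨n, rfl⟩ x
  exact (Commute.iterate_self f n) x

theorem eval_image_ellisSemigroup [CompactSpace X] [T2Space X]
    (hw : DenseRange fun n : ℕ => f^[n] w) : (fun g : X → X => g w) '' ellisSemigroup f = univ := by
  rw [ellisSemigroup_eq_closure_range, image_closure_of_isCompact isClosed_closure.isCompact
    (continuous_apply w).continuousOn, ← range_comp]
  exact hw.closure_range

theorem nonempty_homeomorph_ellisSemigroup_of_injOn [CompactSpace X] [T2Space X]
    (hw : DenseRange fun n : ℕ => f^[n] w)
    (hinj : InjOn (fun g : X → X => g w) (ellisSemigroup f)) :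
    Nonempty (ellisSemigroup f ≃ₜ X) := by
  have : CompactSpace (ellisSemigroup f) :=
    isCompact_iff_compactSpace.1 isClosed_closure.isCompact
  let e : ellisSemigroup f ≃ X := Equiv.ofBijective (fun g => g.1 w)
    ⟨injOn_iff_injective.1 hinj, by
      rw [← range_eq_univ, ← eval_image_ellisSemigroup hw, image_eq_range]⟩
  have he : Continuous e := (continuous_apply w).comp continuous_subtype_val
  exact ⟨he.homeoOfEquivCompactToT2⟩

theorem eq_iterate_or_eqOn_of_mem_ellisSemigroup [CompactSpace X] [T2Space X] (hf : Continuous f)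
    (hL : derivedSet (orbitLimitSet f w) = {t}) (hg : g ∈ ellisSemigroup f) :
    (∃ n : ℕ, g = f^[n]) ∨ g w ∈ orbitLimitSet f w ∧ EqOn g (fun _ => t) (orbitLimitSet f w) := by
  rw [ellisSemigroup_eq_closure_range] at hg
  rcases mem_range_or_mapClusterPt_of_mem_closure_range hg with ⟨n, rfl⟩ | hclus
  · exact Or.inl ⟨n, rfl⟩
  · have heval (x : X) : MapClusterPt (g x) atTop fun n : ℕ => f^[n] x :=
      hclus.continuousAt_comp (continuous_apply x).continuousAt
    exact Or.inr ⟨mem_orbitLimitSet_iff.2 (heval w), fun x hx =>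
      eq_of_mapClusterPt_of_tendsto (heval x) (tendsto_iterate_of_mem_orbitLimitSet hf hL hx)⟩

theorem injOn_eval_ellisSemigroup [CompactSpace X] [T2Space X] (hf : Continuous f)
    (hw : DenseRange fun n : ℕ => f^[n] w)
    (hL : derivedSet (orbitLimitSet f w) = {t}) (hLc : (orbitLimitSet f w)ᶜ.Infinite) :
    InjOn (fun g : X → X => g w) (ellisSemigroup f) := by
  intro g hg h hh (hgh : g w = h w)
  have hiso := iterate_notMem_orbitLimitSet hf hw hLc
  rcases eq_iterate_or_eqOn_of_mem_ellisSemigroup hf hL hg with ⟨m, rfl⟩ | ⟨hgw, hgL⟩ <;>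
  rcases eq_iterate_or_eqOn_of_mem_ellisSemigroup hf hL hh with ⟨n, rfl⟩ | ⟨hhw, hhL⟩
  · have : Infinite X := infinite_univ_iff.1 (hLc.mono (subset_univ _))
    rw [injective_iterate_of_denseRange hw hgh]
  · exact absurd (hgh ▸ hhw) (hiso m)
  · exact absurd (hgh ▸ hgw) (hiso n)
  · have horbit : EqOn g h (range fun n : ℕ => f^[n] w) := by
      rintro _ ⟨n, rfl⟩
      exact ((commute_of_mem_ellisSemigroup hf hg).iterate_right n w).trans
        ((congrArg f^[n] hgh).trans ((commute_of_mem_ellisSemigroup hf hh).iterate_right n w).symm)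
    rw [← eqOn_univ, univ_eq_range_union_orbitLimitSet hw]
    exact horbit.union (hgL.trans hhL.symm)

theorem ellis_homeomorphic_omega_sq_general [CompactSpace X] [T2Space X]
    (hX : derivedSet (derivedSet (univ : Set X)) = {t}) (hf : Continuous f)
    (hw : DenseRange fun n : ℕ => f^[n] w) : Nonempty (ellisSemigroup f ≃ₜ X) := by
  have : Infinite X :=
    infinite_univ_iff.1 ((infinite_of_derivedSet_eq_singleton hX).mono (subset_univ _))
  have hXL : derivedSet (univ : Set X) = orbitLimitSet f w := derivedSet_univ_eq_orbitLimitSet hw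
  exact nonempty_homeomorph_ellisSemigroup_of_injOn hw <|
    injOn_eval_ellisSemigroup hf hw (hXL ▸ hX) (hXL ▸ infinite_compl_derivedSet_univ hX)

end EllisSemigroup

section OrdinalInterval

open Ordinal

instance compactSpace_Iic {α : Type*} [Preorder α] [OrderBot α] [TopologicalSpace α]
    [CompactIccSpace α] (a : α) : CompactSpace (Iic a) :=
  isCompact_iff_compactSpace.1 (Icc_bot (a := a) ▸ isCompact_Icc)

theorem mul_omega0_dvd_of_accPt {b c : Ordinal} (h : AccPt b (𝓟 {x | c ∣ x})) : c * ω ∣ b := by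
  have hc : c ≠ 0 := by
    rintro rfl
    exact Set.Infinite.of_accPt h (by simp)
  have hc0 : 0 < c := pos_iff_ne_zero.2 hc
  replace h := (SuccOrder.accPt_principal.1 h).2
  have hmul : c * (b / c) = b := by
    by_contra hne
    obtain ⟨_, ⟨k, rfl⟩, hk, hkb⟩ := h _ ((mul_div_le b c).lt_of_ne hne)
    exact ((mul_lt_mul_iff_right₀ hc0).1 hk).not_ge ((mul_le_iff_le_div hc).1 hkb.le)
  have hlim : Order.IsSuccPrelimit (b / c) := by
    refine Order.isSuccPrelimit_of_succ_lt fun p hp => ?_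
    obtain ⟨_, ⟨k, rfl⟩, hpk, hkb⟩ :=
      h (c * p) (((mul_lt_mul_iff_right₀ hc0).2 hp).trans_eq hmul)
    exact (Order.succ_le_of_lt ((mul_lt_mul_iff_right₀ hc0).1 hpk)).trans_lt
      ((mul_lt_mul_iff_right₀ hc0).1 (hkb.trans_eq hmul.symm))
  exact hmul ▸ mul_dvd_mul_left c (isSuccPrelimit_iff_omega0_dvd.1 hlim)

theorem accPt_of_mul_omega0_dvd {b c : Ordinal} (hb : b ≠ 0) (h : c * ω ∣ b) :
    AccPt b (𝓟 {x | c ∣ x}) := by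
  rw [SuccOrder.accPt_principal, isMin_iff_eq_bot, bot_eq_zero']
  refine ⟨hb, fun a ha => ?_⟩
  obtain ⟨e, rfl⟩ := h
  rw [mul_assoc] at hb ha ⊢
  have hlim : Order.IsSuccLimit (ω * e) := Ordinal.isSuccLimit_iff.2
    ⟨right_ne_zero_of_mul hb, isSuccPrelimit_iff_omega0_dvd.2 (dvd_mul_right ω e)⟩
  obtain ⟨p, hp, hap⟩ := (lt_mul_iff_of_isSuccLimit hlim).1 ha
  exact ⟨c * p, dvd_mul_right c p, hap,
    (mul_lt_mul_iff_right₀ (pos_iff_ne_zero.2 (left_ne_zero_of_mul hb))).2 hp⟩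

theorem derivedSet_setOf_dvd (c : Ordinal) :
    derivedSet {x | c ∣ x} = {x | c * ω ∣ x} \ {0} :=
  ext fun _ => ⟨fun h => ⟨mul_omega0_dvd_of_accPt h,
    fun h0 => AccPt.not_isMin h (h0 ▸ isMin_bot)⟩,
    fun h => accPt_of_mul_omega0_dvd h.2 h.1⟩

theorem opow_two_eq_mul_self (a : Ordinal) : a ^ (2 : Ordinal) = a * a := by
  rw [← one_add_one_eq_two, opow_add, opow_one]

theorem derivedSet_derivedSet_univ_Iic_omega0_sq :
    derivedSet (derivedSet (univ : Set (Iic (ω ^ (2 : Ordinal))))) = {⊤} := by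
  have huniv : (univ : Set (Iic (ω ^ (2 : Ordinal)))) = (↑) ⁻¹' {x : Ordinal | 1 ∣ x} := by simp
  have hopen : IsOpen (Iic (ω ^ (2 : Ordinal))) := Order.Iio_succ (ω ^ (2 : Ordinal)) ▸ isOpen_Iio
  rw [huniv, derivedSet_preimage_val hopen, derivedSet_preimage_val hopen,
    derivedSet_setOf_dvd, derivedSet_sdiff_of_finite _ (finite_singleton 0), one_mul,
    derivedSet_setOf_dvd, ← opow_two_eq_mul_self]
  ext ⟨x, hx⟩
  refine ⟨fun h => Subtype.ext (hx.antisymm (le_of_dvd h.2 h.1)), ?_⟩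
  rintro ⟨⟩
  exact ⟨dvd_rfl, opow_ne_zero 2 omega0_ne_zero⟩

universe u v

theorem nonempty_orderIso_Iic_lift (a : Ordinal.{u}) :
    Nonempty (Iic a ≃o Iic (lift.{v} a)) := by
  refine ⟨StrictMono.orderIsoOfSurjective
    (fun x : Iic a => (⟨lift.{v} x.1, lift_le.2 x.2⟩ : Iic (lift.{v} a)))
    (fun x y h => lift_lt.2 h) ?_⟩
  rintro ⟨y, hy⟩
  obtain ⟨x, rfl⟩ := mem_range_lift_of_le hy
  exact ⟨⟨x, lift_le.1 hy⟩, rfl⟩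

theorem nonempty_homeomorph_Iic_of_lift_eq {a : Ordinal.{u}} {b : Ordinal.{v}}
    (h : lift.{v} a = lift.{u} b) : Nonempty (Iic a ≃ₜ Iic b) := by
  obtain ⟨ea⟩ := nonempty_orderIso_Iic_lift.{u, v} a
  obtain ⟨eb⟩ := nonempty_orderIso_Iic_lift.{v, u} b
  exact ⟨(ea.trans ((OrderIso.setCongr _ _ (by rw [h])).trans eb.symm)).toHomeomorph⟩

/-- The two copies of `ω² + 1` in `ellis_homeomorphic_omega_sq` may live in different universes. -/
theorem nonempty_homeomorph_Iic_omega0_sq :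
    Nonempty (Iic (ω ^ (2 : Ordinal.{u})) ≃ₜ Iic (ω ^ (2 : Ordinal.{v}))) :=
  nonempty_homeomorph_Iic_of_lift_eq (by simp only [opow_two_eq_mul_self, lift_mul, lift_omega0])

end OrdinalInterval

open Ordinal in
/-- Theorem 3.3 (homeomorphism part): For a dynamical system on `ω² + 1` (realized as
`Iic (ω²)` with the order topology) with a dense orbit, the Ellis semigroup `E(X,f)`,
as a subspace of `X → X` with the pointwise-convergence topology, is homeomorphic
to `ω² + 1`. -/
theorem ellis_homeomorphic_omega_sq
    (f : Set.Iic (omega0 ^ (2 : Ordinal)) → Set.Iic (omega0 ^ (2 : Ordinal)))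
    (hf : Continuous f)
    (w : Set.Iic (omega0 ^ (2 : Ordinal)))
    (hw : Dense (Set.range fun n : ℕ => f^[n] w)) :
    Nonempty ((closure {g : Set.Iic (omega0 ^ (2 : Ordinal)) →
        Set.Iic (omega0 ^ (2 : Ordinal)) | ∃ n : ℕ, g = f^[n]} : Set _) ≃ₜ
      Set.Iic (omega0 ^ (2 : Ordinal))) :=
  Nonempty.map2 Homeomorph.trans
    (ellis_homeomorphic_omega_sq_general derivedSet_derivedSet_univ_Iic_omega0_sq hf hw)
    nonempty_homeomorph_Iic_omega0_sq
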